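/- Let n > 1. There exists a constant C = C(n) such that for every f ∈ Lip₀(ℝⁿ) and every t > 0: ∫₀ᵗ (f**(s) − f*(s)) s^{−1/n} ds ≤ C·t·|∇f|**(t), where |∇f|**(t) = (1/t)∫₀ᵗ |∇f|*(s)ds. -/

import Mathlib

open MeasureTheory Set Filter Topology
open scoped ENNReal NNReal

noncomputable section

/-- The distribution function `μ_f(t) = μ{x : |f x| > t}` (as a real number). -/
def distrib {α : Type*} [MeasurableSpace α] (μ : Measure α) (f : α → ℝ) (t : ℝ) : ℝ :=
  (μ {x | t < |f x|}).toReal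

/-- The decreasing rearrangement `f*_μ(s) = inf{t ≥ 0 : μ_f(t) ≤ s}`. -/
def rearr {α : Type*} [MeasurableSpace α] (μ : Measure α) (f : α → ℝ) (s : ℝ) : ℝ :=
  sInf {t : ℝ | 0 ≤ t ∧ distrib μ f t ≤ s}

/-- The maximal function `f**_μ(t) = (1/t) ∫₀ᵗ f*_μ(s) ds`. -/
def rearr2 {α : Type*} [MeasurableSpace α] (μ : Measure α) (f : α → ℝ) (t : ℝ) : ℝ :=
  (1 / t) * ∫ s in (0:ℝ)..t, rearr μ f s

/-- The modulus of the gradient `|∇f|(x) = limsup_{d(x,y)→0} |f x - f y| / d(x,y)`. -/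
def gradMod {Ω : Type*} [MetricSpace Ω] (f : Ω → ℝ) (x : Ω) : ℝ :=
  limsup (fun y => |f x - f y| / dist x y) (𝓝[≠] x)

/-- The Minkowski content `μ⁺(A) = liminf_{h→0⁺} (μ(A_h) - μ(A))/h`. -/
def minkContent {Ω : Type*} [MetricSpace Ω] [MeasurableSpace Ω] (μ : Measure Ω)
    (A : Set Ω) : ℝ :=
  liminf (fun h => ((μ (Metric.thickening h A)).toReal - (μ A).toReal) / h) (𝓝[>] 0)

/-- The isoperimetric profile: the (pointwise maximal) function with
`μ⁺(A) ≥ I(μ(A))` for all Borel sets `A`. -/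
def isoProfile {Ω : Type*} [MetricSpace Ω] [MeasurableSpace Ω] (μ : Measure Ω) (t : ℝ) : ℝ :=
  sInf (minkContent μ '' {A : Set Ω | MeasurableSet A ∧ (μ A).toReal = t})

/-- Condition 1': the isoperimetric profile is continuous, positive on `(0,1)`,
and vanishes at `0`. -/
def Condition1' {Ω : Type*} [MetricSpace Ω] [MeasurableSpace Ω] (μ : Measure Ω) : Prop :=
  ContinuousOn (isoProfile μ) (Icc 0 1) ∧ (∀ t ∈ Ioo (0:ℝ) 1, 0 < isoProfile μ t) ∧
    isoProfile μ 0 = 0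

/-- Condition 2: for Lipschitz `f` and every `c`, `|∇f| = 0` μ-a.e. on `{f = c}`. -/
def Condition2 {Ω : Type*} [MetricSpace Ω] [MeasurableSpace Ω] (μ : Measure Ω) : Prop :=
  ∀ f : Ω → ℝ, (∃ K, LipschitzWith K f) → ∀ c : ℝ,
    ∀ᵐ x ∂(μ.restrict {x | f x = c}), gradMod f x = 0

/-- The weights `w_q` built from the isoperimetric profile. -/
def wq (I : ℝ → ℝ) (q t : ℝ) : ℝ :=
  if q = 1 then sInf ((fun s => I s / s) '' Ioo 0 t)
  else ((1 / t) * ∫ s in (0:ℝ)..t, (s / I s) ^ (q / (q - 1))) ^ ((1 - q) / q)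

/-- Local absolute continuity on `(0,1)`. -/
def LocAbsContOn01 (g : ℝ → ℝ) : Prop :=
  ∀ a b : ℝ, 0 < a → a < b → b < 1 → ∀ ε > 0, ∃ δ > 0,
    ∀ (n : ℕ) (c d : Fin n → ℝ),
      (∀ k, a ≤ c k ∧ c k ≤ d k ∧ d k ≤ b) →
      (Pairwise fun j k => Ioo (c j) (d j) ∩ Ioo (c k) (d k) = ∅) →
      (∑ k, (d k - c k)) ≤ δ → (∑ k, |g (d k) - g (c k)|) ≤ ε

/-!
Write `‖∇f‖` for the operator norm of the derivative and let `0 ≤ l`. For `b > a ≥ 0`, the slice of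
`|f|` between the heights `l + a` and `l + b` equals `b - a` where `|f| > l + b`, and its gradient
lives on `{l + a < |f| < l + b}`. The Gagliardo–Nirenberg–Sobolev inequality with exponent
`n / (n - 1)`, extended from `C¹` to Lipschitz functions by mollification, hence bounds
`(b - a) * μ {|f| > l + b} ^ (1 - 1 / n)` by a multiple of the integral of `‖∇f‖` over that set, and
letting the slices become thin, `∫_{τ > 0} μ {|f| > l + τ} ^ (1 - 1 / n)` by the same multiple of
`∫_{|f| > l} ‖∇f‖`.

Take `l = f*(t)`. For `s ≤ t` the layer-cake formula gives
`s * (f**(s) - f*(s)) ≤ ∫_{τ > 0} min (s, μ {|f| > l + τ})`. Multiplying by `s ^ (-1 - 1 / n)` and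
integrating in `s` first turns the right-hand side into a multiple of
`∫_{τ > 0} μ {|f| > l + τ} ^ (1 - 1 / n)`. Since `μ {|f| > l} ≤ t`, the Hardy–Littlewood inequality
bounds `∫_{|f| > l} ‖∇f‖` by `∫₀ᵗ ‖∇f‖*`.
-/

section Rearrangement

variable {α : Type*} [MeasurableSpace α] {μ : Measure α} {h : α → ℝ} {s t τ : ℝ}

lemma rearr_nonneg (μ : Measure α) (h : α → ℝ) (s : ℝ) : 0 ≤ rearr μ h s :=
  Real.sInf_nonneg fun _ hx => hx.1

lemma rearr_le_of_distrib_le (hτ : 0 ≤ τ) (hd : distrib μ h τ ≤ s) : rearr μ h s ≤ τ :=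
  csInf_le ⟨0, fun _ hx => hx.1⟩ ⟨hτ, hd⟩

lemma rearr_le_of_abs_le {B : ℝ} (hB₀ : 0 ≤ B) (hB : ∀ x, |h x| ≤ B) (hs : 0 ≤ s) :
    rearr μ h s ≤ B := by
  refine rearr_le_of_distrib_le hB₀ ?_
  simpa [distrib, (hB _).not_gt] using hs

lemma measure_lt_abs_ne_top (hfin : μ (Function.support h) ≠ ∞) (hτ : 0 ≤ τ) :
    μ {x | τ < |h x|} ≠ ∞ :=
  measure_ne_top_of_subset (fun _ hx => abs_pos.1 (hτ.trans_lt hx)) hfin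

lemma ofReal_distrib (hfin : μ (Function.support h) ≠ ∞) (hτ : 0 ≤ τ) :
    ENNReal.ofReal (distrib μ h τ) = μ {x | τ < |h x|} :=
  ENNReal.ofReal_toReal (measure_lt_abs_ne_top hfin hτ)

lemma antitone_measure_lt_abs (μ : Measure α) (h : α → ℝ) :
    Antitone fun τ => μ {x | τ < |h x|} :=
  fun _ _ hab => measure_mono fun _ hx => hab.trans_lt hx

lemma tendsto_distrib_atTop (hm : AEMeasurable h μ) (hfin : μ (Function.support h) ≠ ∞) :
    Tendsto (distrib μ h) atTop (𝓝 0) := by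
  have hempty : ⋂ τ : ℝ, {x | τ < |h x|} = ∅ :=
    eq_empty_of_forall_notMem fun x hx =>
      lt_irrefl |h x| (mem_iInter.1 hx |h x| :)
  have hlim := tendsto_measure_iInter_atTop (μ := μ) (s := fun τ : ℝ => {x | τ < |h x|})
    (fun τ => nullMeasurableSet_lt aemeasurable_const (by fun_prop))
    (fun _ _ hab _ hx => hab.trans_lt hx) ⟨0, measure_lt_abs_ne_top hfin le_rfl⟩
  rw [hempty, measure_empty] at hlim
  exact (ENNReal.tendsto_toReal ENNReal.zero_ne_top).comp hlim

lemma nonempty_setOf_distrib_le (hm : AEMeasurable h μ) (hfin : μ (Function.support h) ≠ ∞)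
    (hs : 0 < s) : {t : ℝ | 0 ≤ t ∧ distrib μ h t ≤ s}.Nonempty :=
  ((eventually_ge_atTop 0).and
    ((tendsto_distrib_atTop hm hfin).eventually_le_const hs)).exists

-- `0` is left out because `rearr μ h 0` has the junk value `sInf ∅ = 0` when `h` is unbounded.
lemma rearr_antitoneOn (hm : AEMeasurable h μ) (hfin : μ (Function.support h) ≠ ∞) :
    AntitoneOn (rearr μ h) (Ioi 0) := fun _ hs _ _ hle =>
  csInf_le_csInf ⟨0, fun _ ht => ht.1⟩ (nonempty_setOf_distrib_le hm hfin hs)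
    fun _ ht => ⟨ht.1, ht.2.trans hle⟩

lemma aemeasurable_rearr (hm : AEMeasurable h μ) (hfin : μ (Function.support h) ≠ ∞) (t : ℝ) :
    AEMeasurable (rearr μ h) (volume.restrict (Ioc 0 t)) :=
  aemeasurable_restrict_of_antitoneOn measurableSet_Ioc
    ((rearr_antitoneOn hm hfin).mono Ioc_subset_Ioi_self)

lemma distrib_le_of_forall_gt (hfin : μ (Function.support h) ≠ ∞) (hτ : 0 ≤ τ)
    (hle : ∀ t > τ, distrib μ h t ≤ s) : distrib μ h τ ≤ s := by
  obtain ⟨u, hu_anti, hu_gt, hu_lim⟩ := exists_seq_strictAnti_tendsto τ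
  have hunion : ⋃ k, {x | u k < |h x|} = {x | τ < |h x|} := by
    ext x
    simp only [mem_iUnion, mem_ofPred_eq]
    exact ⟨fun ⟨k, hk⟩ => (hu_gt k).trans hk, fun hx => (hu_lim.eventually_lt_const hx).exists⟩
  have hlim := tendsto_measure_iUnion_atTop (μ := μ) (s := fun k => {x | u k < |h x|})
    fun _ _ hij _ hx => (hu_anti.antitone hij).trans_lt hx
  rw [hunion] at hlim
  exact le_of_tendsto' ((ENNReal.tendsto_toReal (measure_lt_abs_ne_top hfin hτ)).comp hlim)
    fun k => hle _ (hu_gt k)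

lemma lt_rearr_iff (hm : AEMeasurable h μ) (hfin : μ (Function.support h) ≠ ∞)
    (hs : 0 < s) (hτ : 0 ≤ τ) : τ < rearr μ h s ↔ s < distrib μ h τ := by
  refine ⟨fun hlt => lt_of_not_ge fun hd => (rearr_le_of_distrib_le hτ hd).not_gt hlt,
    fun hlt => lt_of_not_ge fun hr => hlt.not_ge ?_⟩
  refine distrib_le_of_forall_gt hfin hτ fun t ht => ?_
  obtain ⟨t', ⟨ht'₀, ht'⟩, ht't⟩ :=
    exists_lt_of_csInf_lt (nonempty_setOf_distrib_le hm hfin hs) (hr.trans_lt ht)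
  exact (ENNReal.toReal_mono (measure_lt_abs_ne_top hfin ht'₀)
    (antitone_measure_lt_abs μ h ht't.le)).trans ht'

lemma measure_rearr_lt_abs_le (hm : AEMeasurable h μ) (hfin : μ (Function.support h) ≠ ∞)
    (hs : 0 < s) : μ {x | rearr μ h s < |h x|} ≤ ENNReal.ofReal s := by
  have hr := rearr_nonneg μ h s
  rw [← ofReal_distrib hfin hr]
  exact ENNReal.ofReal_le_ofReal <|
    not_lt.1 fun hlt => lt_irrefl _ ((lt_rearr_iff hm hfin hs hr).2 hlt)

lemma volume_restrict_Ioc_lt_rearr (hm : AEMeasurable h μ) (hfin : μ (Function.support h) ≠ ∞)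
    (hτ : 0 ≤ τ) : volume.restrict (Ioc 0 s) {u | τ < rearr μ h u} =
      min (ENNReal.ofReal s) (μ {x | τ < |h x|}) := by
  have hset : {u | τ < rearr μ h u} ∩ Ioc 0 s = Iio (distrib μ h τ) ∩ Ioc 0 s := by
    ext u
    exact and_congr_left fun hu => lt_rearr_iff hm hfin hu.1 hτ
  calc volume.restrict (Ioc 0 s) {u | τ < rearr μ h u}
      = volume (Iic (distrib μ h τ) ∩ Ioc 0 s) := by
        rw [Measure.restrict_apply' measurableSet_Ioc, hset]
        exact measure_congr (Iio_ae_eq_Iic.inter (ae_eq_refl _))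
    _ = min (ENNReal.ofReal s) (μ {x | τ < |h x|}) := by
        rw [inter_comm, Ioc_inter_Iic, Real.volume_Ioc, sub_zero, ENNReal.ofReal_min,
          ofReal_distrib hfin hτ]

lemma lintegral_ofReal_rearr_sub (hm : AEMeasurable h μ) (hfin : μ (Function.support h) ≠ ∞)
    {l : ℝ} (hl : 0 ≤ l) (s : ℝ) : ∫⁻ u in Ioc 0 s, ENNReal.ofReal (rearr μ h u - l) =
      ∫⁻ τ in Ioi (0 : ℝ), min (ENNReal.ofReal s) (μ {x | l + τ < |h x|}) := by
  have hmeas : AEMeasurable (fun u => max (rearr μ h u - l) 0) (volume.restrict (Ioc 0 s)) :=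
    ((aemeasurable_rearr hm hfin s).sub_const l).max aemeasurable_const
  calc ∫⁻ u in Ioc 0 s, ENNReal.ofReal (rearr μ h u - l)
      = ∫⁻ u in Ioc 0 s, ENNReal.ofReal (max (rearr μ h u - l) 0) := by
        simp only [ENNReal.ofReal_max, ENNReal.ofReal_zero, max_eq_left zero_le]
    _ = ∫⁻ τ in Ioi 0, volume.restrict (Ioc 0 s) {u | τ < max (rearr μ h u - l) 0} :=
        lintegral_eq_lintegral_meas_lt _ (Eventually.of_forall fun _ => le_max_right _ _) hmeas
    _ = _ := by
        refine setLIntegral_congr_fun measurableSet_Ioi fun τ (hτ : 0 < τ) => ?_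
        simp only [lt_max_iff, hτ.not_gt, or_false, lt_sub_iff_add_lt']
        exact volume_restrict_Ioc_lt_rearr hm hfin (by positivity)

lemma setLIntegral_enorm_le_lintegral_rearr (hm : AEMeasurable h μ)
    (hfin : μ (Function.support h) ≠ ∞) {E : Set α} (hE : μ E ≤ ENNReal.ofReal t) :
    ∫⁻ x in E, ‖h x‖ₑ ∂μ ≤ ∫⁻ s in Ioc 0 t, ENNReal.ofReal (rearr μ h s) := by
  calc ∫⁻ x in E, ‖h x‖ₑ ∂μ
      = ∫⁻ τ in Ioi 0, μ.restrict E {x | τ < |h x|} := by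
        simp only [Real.enorm_eq_ofReal_abs]
        exact lintegral_eq_lintegral_meas_lt _ (Eventually.of_forall fun _ => abs_nonneg _)
          hm.abs.restrict
    _ ≤ ∫⁻ τ in Ioi 0, min (ENNReal.ofReal t) (μ {x | 0 + τ < |h x|}) := by
        refine lintegral_mono fun τ => le_min ?_ ?_
        · exact (measure_mono (subset_univ _)).trans (by simpa using hE)
        · simpa only [zero_add] using Measure.restrict_apply_le _ _
    _ = ∫⁻ s in Ioc 0 t, ENNReal.ofReal (rearr μ h s) := by
        simpa only [sub_zero] using (lintegral_ofReal_rearr_sub hm hfin le_rfl t).symm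

lemma integrableOn_rearr {B : ℝ} (hm : AEMeasurable h μ) (hfin : μ (Function.support h) ≠ ∞)
    (hB : ∀ x, |h x| ≤ B) (t : ℝ) : IntegrableOn (rearr μ h) (Ioc 0 t) := by
  refine Integrable.of_bound (aemeasurable_rearr hm hfin t).aestronglyMeasurable (max B 0) ?_
  filter_upwards [ae_restrict_mem measurableSet_Ioc] with s hs
  rw [Real.norm_of_nonneg (rearr_nonneg μ h s)]
  exact rearr_le_of_abs_le (le_max_right _ _) (fun x => (hB x).trans (le_max_left _ _)) hs.1.le

lemma mul_rearr2 (ht : 0 < t) : t * rearr2 μ h t = ∫ s in Ioc 0 t, rearr μ h s := by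
  rw [rearr2, intervalIntegral.integral_of_le ht.le, one_div, mul_inv_cancel_left₀ ht.ne']

lemma rearr2_sub_eq (hint : IntegrableOn (rearr μ h) (Ioc 0 s)) (hs : 0 < s) (l : ℝ) :
    rearr2 μ h s - l = (1 / s) * ∫ u in Ioc 0 s, (rearr μ h u - l) := by
  rw [integral_sub hint (by simp), setIntegral_const, rearr2,
    intervalIntegral.integral_of_le hs.le, Real.volume_real_Ioc_of_le hs.le, smul_eq_mul]
  field_simp
  ring

lemma rearr_le_rearr2 (hm : AEMeasurable h μ) (hfin : μ (Function.support h) ≠ ∞)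
    (hint : IntegrableOn (rearr μ h) (Ioc 0 s)) (hs : 0 < s) : rearr μ h s ≤ rearr2 μ h s := by
  rw [← sub_nonneg, rearr2_sub_eq hint hs]
  refine mul_nonneg (by positivity) (setIntegral_nonneg measurableSet_Ioc fun u hu => ?_)
  exact sub_nonneg.2 (rearr_antitoneOn hm hfin hu.1 hs hu.2)

lemma aestronglyMeasurable_rearr2 (hint : IntegrableOn (rearr μ h) (Ioc 0 t)) :
    AEStronglyMeasurable (rearr2 μ h) (volume.restrict (Ioc 0 t)) := by
  have hprimitive : ContinuousOn (fun s => ∫ u in Ioc 0 s, rearr μ h u) (Ioc 0 t) :=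
    (intervalIntegral.continuousOn_primitive
      ((integrableOn_Icc_iff_integrableOn_Ioc (by simp)).2 hint)).mono Ioc_subset_Icc_self
  have hinv : ContinuousOn (fun s : ℝ => 1 / s) (Ioc 0 t) :=
    continuousOn_const.div continuousOn_id fun s hs => hs.1.ne'
  refine ((hinv.mul hprimitive).congr fun s hs => ?_).aestronglyMeasurable measurableSet_Ioc
  rw [rearr2, intervalIntegral.integral_of_le hs.1.le]
  rfl

lemma ofReal_rearr2_sub_rearr_le (hm : AEMeasurable h μ) (hfin : μ (Function.support h) ≠ ∞)
    (hint : IntegrableOn (rearr μ h) (Ioc 0 s)) (hs : 0 < s) (hst : s ≤ t) :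
    ENNReal.ofReal (rearr2 μ h s - rearr μ h s) ≤ ENNReal.ofReal (1 / s) *
      ∫⁻ τ in Ioi (0 : ℝ), min (ENNReal.ofReal s) (μ {x | rearr μ h t + τ < |h x|}) := by
  have hmono : rearr μ h t ≤ rearr μ h s := rearr_antitoneOn hm hfin hs (hs.trans_le hst) hst
  have hint' : IntegrableOn (fun u => rearr μ h u - rearr μ h t) (Ioc 0 s) := hint.sub (by simp)
  calc ENNReal.ofReal (rearr2 μ h s - rearr μ h s)
      ≤ ENNReal.ofReal (rearr2 μ h s - rearr μ h t) := by gcongr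
    _ = ENNReal.ofReal (1 / s) * ENNReal.ofReal (∫ u in Ioc 0 s, (rearr μ h u - rearr μ h t)) := by
        rw [rearr2_sub_eq hint hs, ENNReal.ofReal_mul (by positivity)]
    _ = ENNReal.ofReal (1 / s) * ∫⁻ u in Ioc 0 s, ENNReal.ofReal (rearr μ h u - rearr μ h t) := by
        rw [ofReal_integral_eq_lintegral_ofReal hint']
        filter_upwards [ae_restrict_mem measurableSet_Ioc] with u hu
        exact sub_nonneg.2 (rearr_antitoneOn hm hfin hu.1 (hs.trans_le hst) (hu.2.trans hst))
    _ = _ := by rw [lintegral_ofReal_rearr_sub hm hfin (rearr_nonneg μ h t)]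

end Rearrangement

lemma lintegral_Ioc_rpow {r d : ℝ} (hr : -1 < r) (hd : 0 < d) :
    ∫⁻ s in Ioc 0 d, ENNReal.ofReal (s ^ r) = ENNReal.ofReal (d ^ (r + 1) / (r + 1)) := by
  rw [← ofReal_integral_eq_lintegral_ofReal, ← intervalIntegral.integral_of_le hd.le,
    integral_rpow (Or.inl hr), Real.zero_rpow (by linarith), sub_zero]
  · exact (intervalIntegrable_iff_integrableOn_Ioc_of_le hd.le).1
      (intervalIntegral.intervalIntegrable_rpow' hr)
  · filter_upwards [ae_restrict_mem measurableSet_Ioc] with s hs using Real.rpow_nonneg hs.1.le _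

lemma lintegral_Ioi_rpow {r d : ℝ} (hr : r < -1) (hd : 0 < d) :
    ∫⁻ s in Ioi d, ENNReal.ofReal (s ^ r) = ENNReal.ofReal (-d ^ (r + 1) / (r + 1)) := by
  rw [← ofReal_integral_eq_lintegral_ofReal (integrableOn_Ioi_rpow_of_lt hr hd),
    integral_Ioi_rpow_of_lt hr hd]
  filter_upwards [ae_restrict_mem measurableSet_Ioi] with s hs
    using Real.rpow_nonneg (hd.trans hs).le _

lemma lintegral_rpow_mul_min_le {β : ℝ} (hβ₀ : 0 < β) (hβ₁ : β < 1) (D : ℝ≥0∞) :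
    ∫⁻ s in Ioi (0 : ℝ), ENNReal.ofReal (s ^ (-1 - β)) * min (ENNReal.ofReal s) D ≤
      ENNReal.ofReal (1 / (1 - β) + 1 / β) * D ^ (1 - β) := by
  have hβ' : 0 < 1 - β := sub_pos.2 hβ₁
  rcases eq_or_ne D 0 with rfl | hD₀
  · simp
  rcases eq_or_ne D ∞ with rfl | hD
  · simp [ENNReal.top_rpow_of_pos hβ', ENNReal.mul_top, add_pos, hβ₀, hβ₁]
  obtain ⟨d, hd, rfl⟩ : ∃ d : ℝ, 0 < d ∧ ENNReal.ofReal d = D :=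
    ⟨D.toReal, ENNReal.toReal_pos hD₀ hD, ENNReal.ofReal_toReal hD⟩
  have hsmall : ∫⁻ s in Ioc 0 d,
      ENNReal.ofReal (s ^ (-1 - β)) * min (ENNReal.ofReal s) (ENNReal.ofReal d) ≤
      ENNReal.ofReal (d ^ (1 - β) / (1 - β)) := by
    calc _ ≤ ∫⁻ s in Ioc 0 d, ENNReal.ofReal (s ^ (-β)) := by
          refine setLIntegral_mono' measurableSet_Ioc fun s hs => ?_
          grw [min_le_left]
          rw [← ENNReal.ofReal_mul (Real.rpow_nonneg hs.1.le _), ← Real.rpow_add_one hs.1.ne',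
            show -1 - β + 1 = -β by ring]
      _ = _ := by rw [lintegral_Ioc_rpow (by linarith) hd, neg_add_eq_sub]
  have hlarge : ∫⁻ s in Ioi d,
      ENNReal.ofReal (s ^ (-1 - β)) * min (ENNReal.ofReal s) (ENNReal.ofReal d) ≤
      ENNReal.ofReal (d ^ (1 - β) / β) := by
    calc _ ≤ ∫⁻ s in Ioi d, ENNReal.ofReal (s ^ (-1 - β)) * ENNReal.ofReal d :=
          lintegral_mono fun s => by grw [min_le_right]
      _ = ENNReal.ofReal (d ^ (-β) / β * d) := by
          rw [lintegral_mul_const' _ _ (by simp), lintegral_Ioi_rpow (by linarith) hd,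
            ENNReal.ofReal_mul (by positivity)]
          ring_nf
      _ = _ := by rw [div_mul_eq_mul_div, ← Real.rpow_add_one hd.ne', neg_add_eq_sub]
  calc _ ≤ ENNReal.ofReal (d ^ (1 - β) / (1 - β)) + ENNReal.ofReal (d ^ (1 - β) / β) := by
        rw [← Ioc_union_Ioi_eq_Ioi hd.le]
        exact (lintegral_union_le _ _ _).trans (add_le_add hsmall hlarge)
    _ = ENNReal.ofReal (1 / (1 - β) + 1 / β) * ENNReal.ofReal d ^ (1 - β) := by
        rw [ENNReal.ofReal_rpow_of_pos hd,
          ← ENNReal.ofReal_mul (by positivity), ← ENNReal.ofReal_add (by positivity)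
          (by positivity)]
        ring_nf

lemma lintegral_oscillation_le {α : Type*} [MeasurableSpace α] {μ : Measure α} {h : α → ℝ}
    {t β : ℝ} (hm : AEMeasurable h μ) (hfin : μ (Function.support h) ≠ ∞)
    (hint : IntegrableOn (rearr μ h) (Ioc 0 t)) (hβ₀ : 0 < β) (hβ₁ : β < 1) :
    ∫⁻ s in Ioc 0 t, ENNReal.ofReal ((rearr2 μ h s - rearr μ h s) * s ^ (-β)) ≤
      ENNReal.ofReal (1 / (1 - β) + 1 / β) *
        ∫⁻ τ in Ioi (0 : ℝ), μ {x | rearr μ h t + τ < |h x|} ^ (1 - β) := by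
  set D : ℝ → ℝ≥0∞ := fun τ => μ {x | rearr μ h t + τ < |h x|}
  have hD : Measurable D :=
    ((antitone_measure_lt_abs μ h).comp_monotone (monotone_id.const_add _)).measurable
  calc _ ≤ ∫⁻ s in Ioc 0 t, ∫⁻ τ in Ioi (0 : ℝ),
          ENNReal.ofReal (s ^ (-1 - β)) * min (ENNReal.ofReal s) (D τ) := by
        refine setLIntegral_mono' measurableSet_Ioc fun s ⟨hs, hst⟩ => ?_
        have hpow : s ^ (-1 - β) = 1 / s * s ^ (-β) := by
          rw [sub_eq_add_neg, Real.rpow_add hs, Real.rpow_neg_one, one_div]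
        rw [lintegral_const_mul' _ _ (by simp), hpow, ENNReal.ofReal_mul (one_div_nonneg.2 hs.le),
          ENNReal.ofReal_mul' (Real.rpow_nonneg hs.le _), mul_right_comm]
        gcongr
        exact ofReal_rearr2_sub_rearr_le hm hfin (hint.mono_set (Ioc_subset_Ioc_right hst)) hs hst
    _ ≤ ∫⁻ s in Ioi 0, ∫⁻ τ in Ioi (0 : ℝ),
          ENNReal.ofReal (s ^ (-1 - β)) * min (ENNReal.ofReal s) (D τ) :=
        lintegral_mono_set Ioc_subset_Ioi_self
    _ = ∫⁻ τ in Ioi (0 : ℝ), ∫⁻ s in Ioi 0,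
          ENNReal.ofReal (s ^ (-1 - β)) * min (ENNReal.ofReal s) (D τ) :=
        lintegral_lintegral_swap (by fun_prop)
    _ ≤ ∫⁻ τ in Ioi (0 : ℝ), ENNReal.ofReal (1 / (1 - β) + 1 / β) * D τ ^ (1 - β) :=
        lintegral_mono fun τ => lintegral_rpow_mul_min_le hβ₀ hβ₁ _
    _ = _ := lintegral_const_mul' _ _ (by simp)

/-- The slice of `|y|` between the heights `a ≤ b`, that is, the function which vanishes for
`|y| ≤ a`, is constantly `b - a` for `|y| ≥ b`, and grows with slope one in between. Composing with
it truncates a function to one of its level slices. -/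
def levelSlice (a b y : ℝ) : ℝ := min (max |y| a) b - a

section LevelSlice

variable {E : Type*} [NormedAddCommGroup E] [NormedSpace ℝ E] {f : E → ℝ} {a b y : ℝ}

lemma lipschitzWith_levelSlice (a b : ℝ) : LipschitzWith 1 (levelSlice a b) := by
  have habs : LipschitzWith 1 fun y : ℝ => |y| := lipschitzWith_one_norm
  exact add_zero (1 : ℝ≥0) ▸ ((habs.max_const a).min_const b).sub (LipschitzWith.const a)

lemma levelSlice_of_le (hab : a ≤ b) (hy : |y| ≤ a) : levelSlice a b y = 0 := by
  simp [levelSlice, hy, hab]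

lemma levelSlice_of_ge (hy : b ≤ |y|) : levelSlice a b y = b - a := by
  simp [levelSlice, hy]

lemma levelSlice_of_mem_Ioo (hy : |y| ∈ Ioo a b) : levelSlice a b y = |y| - a := by
  simp [levelSlice, hy.1.le, hy.2.le]

lemma levelSlice_nonneg (hab : a ≤ b) (y : ℝ) : 0 ≤ levelSlice a b y := by
  simp [levelSlice, hab]

lemma levelSlice_le (a b y : ℝ) : levelSlice a b y ≤ b - a := by
  simp [levelSlice]

lemma enorm_fderiv_abs_comp {x : E} (hf : ContinuousAt f x) (hx : f x ≠ 0) :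
    ‖fderiv ℝ (fun z => |f z|) x‖ₑ = ‖fderiv ℝ f x‖ₑ := by
  rcases hx.lt_or_gt with hneg | hpos
  · have habs : (fun z => |f z|) =ᶠ[𝓝 x] fun z => -f z := by
      filter_upwards [hf.eventually_lt_const hneg] with z hz using abs_of_neg hz
    rw [habs.fderiv_eq, fderiv_fun_neg, enorm_neg]
  · have habs : (fun z => |f z|) =ᶠ[𝓝 x] f := by
      filter_upwards [hf.eventually_const_lt hpos] with z hz using abs_of_pos hz
    rw [habs.fderiv_eq]

lemma enorm_fderiv_levelSlice_comp_le (hf : Continuous f) (ha : 0 ≤ a) (hab : a ≤ b) (x : E) :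
    ‖fderiv ℝ (levelSlice a b ∘ f) x‖ₑ ≤
      {x | |f x| ∈ Ioo a b}.indicator (fun x => ‖fderiv ℝ f x‖ₑ) x := by
  rcases le_or_gt |f x| a with hxa | hxa
  · have hmin : IsLocalMin (levelSlice a b ∘ f) x := Eventually.of_forall fun z => by
      simpa only [Function.comp_apply, levelSlice_of_le hab hxa] using levelSlice_nonneg hab (f z)
    simp [← ofReal_norm, hmin.fderiv_eq_zero]
  rcases le_or_gt b |f x| with hxb | hxb
  · have hmax : IsLocalMax (levelSlice a b ∘ f) x := Eventually.of_forall fun z => by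
      simpa only [Function.comp_apply, levelSlice_of_ge hxb] using levelSlice_le a b (f z)
    simp [← ofReal_norm, hmax.fderiv_eq_zero]
  have hx : |f x| ∈ Ioo a b := ⟨hxa, hxb⟩
  have hslice : levelSlice a b ∘ f =ᶠ[𝓝 x] fun z => |f z| - a := by
    filter_upwards [hf.abs.continuousAt.preimage_mem_nhds (isOpen_Ioo.mem_nhds hx)] with z hz
      using levelSlice_of_mem_Ioo hz
  rw [indicator_of_mem (by exact hx), hslice.fderiv_eq, fderiv_sub_const,
    enorm_fderiv_abs_comp hf.continuousAt (abs_pos.1 (ha.trans_lt hxa))]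

end LevelSlice

section Averaging

variable {ν : Measure ℝ} [SFinite ν]

lemma lintegral_measure_Ioo_sub (ν : Measure ℝ) [SFinite ν] (ε : ℝ) :
    ∫⁻ τ, ν (Ioo (τ - ε) τ) = ENNReal.ofReal ε * ν univ := by
  have hstrip : MeasurableSet {q : ℝ × ℝ | q.2 ∈ Ioo (q.1 - ε) q.1} := by
    simp only [mem_Ioo]
    measurability
  have hsection (y : ℝ) : {τ | y ∈ Ioo (τ - ε) τ} = Ioo y (y + ε) := by
    ext τ
    simp only [mem_ofPred_eq, mem_Ioo, sub_lt_iff_lt_add, and_comm]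
  calc ∫⁻ τ, ν (Ioo (τ - ε) τ)
      = ∫⁻ y, volume {τ | y ∈ Ioo (τ - ε) τ} ∂ν :=
        (Measure.prod_apply hstrip).symm.trans (Measure.prod_apply_symm hstrip)
    _ = ENNReal.ofReal ε * ν univ := by
        simp only [hsection, Real.volume_Ioo, add_sub_cancel_left, lintegral_const]

-- Averaging over windows of length `ε` takes the place of differentiating `τ ↦ ν (Ioi τ)`.
lemma setLIntegral_Ioi_le_measure {D : ℝ → ℝ≥0∞} {ε : ℝ} (hε : 0 < ε)
    (hD : ∀ a b, 0 ≤ a → a < b → ENNReal.ofReal (b - a) * D b ≤ ν (Ioo a b)) :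
    ∫⁻ τ in Ioi ε, D τ ≤ ν (Ioi 0) := by
  have hε₀ : ENNReal.ofReal ε ≠ 0 := by simpa using hε
  rw [← ENNReal.mul_le_mul_iff_right hε₀ ENNReal.ofReal_ne_top]
  calc ENNReal.ofReal ε * ∫⁻ τ in Ioi ε, D τ
      = ∫⁻ τ in Ioi ε, ENNReal.ofReal ε * D τ :=
        (lintegral_const_mul' _ _ ENNReal.ofReal_ne_top).symm
    _ ≤ ∫⁻ τ in Ioi ε, ν.restrict (Ioi 0) (Ioo (τ - ε) τ) := by
        refine setLIntegral_mono' measurableSet_Ioi fun τ (hτ : ε < τ) => ?_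
        have hsub : Ioo (τ - ε) τ ⊆ Ioi 0 := fun y hy => (sub_pos.2 hτ).trans hy.1
        rw [Measure.restrict_eq_self _ hsub]
        simpa using hD (τ - ε) τ (sub_pos.2 hτ).le (sub_lt_self τ hε)
    _ ≤ ∫⁻ τ, ν.restrict (Ioi 0) (Ioo (τ - ε) τ) := setLIntegral_le_lintegral _ _
    _ = ENNReal.ofReal ε * ν (Ioi 0) := by
        rw [lintegral_measure_Ioo_sub, Measure.restrict_apply_univ]

lemma setLIntegral_Ioi_zero_le_measure {D : ℝ → ℝ≥0∞}
    (hD : ∀ a b, 0 ≤ a → a < b → ENNReal.ofReal (b - a) * D b ≤ ν (Ioo a b)) :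
    ∫⁻ τ in Ioi 0, D τ ≤ ν (Ioi 0) := by
  obtain ⟨u, hu_anti, hu_pos, hu_lim⟩ := exists_seq_strictAnti_tendsto (0 : ℝ)
  have hunion : Ioi (0 : ℝ) = ⋃ k, Ioi (u k) := by
    ext τ
    simp only [mem_iUnion, mem_Ioi]
    exact ⟨fun hτ => (hu_lim.eventually_lt_const hτ).exists, fun ⟨k, hk⟩ => (hu_pos k).trans hk⟩
  have hdir : Directed (· ⊆ ·) fun k => Ioi (u k) :=
    Monotone.directed_le fun _ _ hij => Ioi_subset_Ioi (hu_anti.antitone hij)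
  conv_lhs => rw [hunion, setLIntegral_iUnion_of_directed _ hdir]
  exact iSup_le fun k => setLIntegral_Ioi_le_measure (hu_pos k) hD

end Averaging

lemma measure_support_ne_top {X β : Type*} [TopologicalSpace X] [MeasurableSpace X] [Zero β]
    (μ : Measure X) [IsFiniteMeasureOnCompacts μ] {h : X → β} (hc : HasCompactSupport h) :
    μ (Function.support h) ≠ ∞ :=
  measure_ne_top_of_subset (subset_tsupport h) hc.isCompact.measure_lt_top.ne

lemma integrable_and_integral_le_of_lintegral_ofReal_le {α : Type*} [MeasurableSpace α]
    {μ : Measure α} {F G : α → ℝ} {C : ℝ≥0} (hF : AEStronglyMeasurable F μ) (hF₀ : 0 ≤ᵐ[μ] F)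
    (hG : Integrable G μ) (hG₀ : 0 ≤ᵐ[μ] G)
    (hFG : ∫⁻ x, ENNReal.ofReal (F x) ∂μ ≤ C * ∫⁻ x, ENNReal.ofReal (G x) ∂μ) :
    Integrable F μ ∧ ∫ x, F x ∂μ ≤ C * ∫ x, G x ∂μ := by
  rw [← ofReal_integral_eq_lintegral_ofReal hG hG₀, ← ENNReal.ofReal_coe_nnreal,
    ← ENNReal.ofReal_mul C.coe_nonneg] at hFG
  have hFi : Integrable F μ := (lintegral_ofReal_ne_top_iff_integrable hF hF₀).1
    (ne_top_of_le_ne_top ENNReal.ofReal_ne_top hFG)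
  rw [← ofReal_integral_eq_lintegral_ofReal hFi hF₀] at hFG
  exact ⟨hFi, (ENNReal.ofReal_le_ofReal_iff
    (mul_nonneg C.coe_nonneg (integral_nonneg_of_ae hG₀))).1 hFG⟩

lemma mul_measure_rpow_le_eLpNorm {α β : Type*} [MeasurableSpace α] [NormedAddCommGroup β]
    {μ : Measure α} {h : α → β} {p : ℝ≥0∞} (hp₀ : p ≠ 0) (hp : p ≠ ∞)
    (hm : AEStronglyMeasurable h μ) (ε : ℝ≥0∞) :
    ε * μ {x | ε ≤ ‖h x‖ₑ} ^ (1 / p.toReal) ≤ eLpNorm h p μ := by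
  have hp' : 0 < p.toReal := ENNReal.toReal_pos hp₀ hp
  rw [← ENNReal.rpow_le_rpow_iff hp', ENNReal.mul_rpow_of_nonneg _ _ hp'.le, ← ENNReal.rpow_mul,
    one_div_mul_cancel hp'.ne', ENNReal.rpow_one]
  exact mul_meas_ge_le_pow_eLpNorm' μ hp₀ hp hm ε

section Sobolev

open Module Convolution ContinuousLinearMap

variable {F : Type*} [NormedAddCommGroup F] [NormedSpace ℝ F]

lemma lintegral_enorm_convolution_le {G : Type*} [AddGroup G] [MeasurableSpace G] [MeasurableAdd₂ G]
    [MeasurableNeg G] {μ : Measure G} [SFinite μ] [μ.IsAddRightInvariant] {φ : G → ℝ} {g : G → F}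
    (hφ : Measurable φ) (hg : Measurable fun x => ‖g x‖ₑ) :
    ∫⁻ x, ‖(φ ⋆[lsmul ℝ ℝ, μ] g) x‖ₑ ∂μ ≤ (∫⁻ x, ‖φ x‖ₑ ∂μ) * ∫⁻ x, ‖g x‖ₑ ∂μ := by
  calc ∫⁻ x, ‖(φ ⋆[lsmul ℝ ℝ, μ] g) x‖ₑ ∂μ
      ≤ ∫⁻ x, ∫⁻ y, ‖φ y‖ₑ * ‖g (x - y)‖ₑ ∂μ ∂μ := by
        refine lintegral_mono fun x => (enorm_integral_le_lintegral_enorm _).trans_eq ?_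
        simp only [lsmul_apply, enorm_smul]
    _ = ∫⁻ y, ∫⁻ x, ‖φ y‖ₑ * ‖g (x - y)‖ₑ ∂μ ∂μ :=
        lintegral_lintegral_swap <| Measurable.aemeasurable <|
          (hφ.enorm.comp measurable_snd).mul (hg.comp (measurable_fst.sub measurable_snd))
    _ = ∫⁻ y, ‖φ y‖ₑ * ∫⁻ x, ‖g x‖ₑ ∂μ ∂μ := by
        refine lintegral_congr fun y => ?_
        rw [lintegral_const_mul' _ _ enorm_ne_top,
          lintegral_sub_right_eq_self (fun x => ‖g x‖ₑ) y]
    _ = (∫⁻ x, ‖φ x‖ₑ ∂μ) * ∫⁻ x, ‖g x‖ₑ ∂μ := lintegral_mul_const _ hφ.enorm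

variable {E : Type*} [NormedAddCommGroup E] [NormedSpace ℝ E] [FiniteDimensional ℝ E]
  [MeasurableSpace E] [BorelSpace E] {μ : Measure E} [μ.IsAddHaarMeasure]
  [FiniteDimensional ℝ F]

lemma hasFDerivAt_convolution_of_lipschitzWith {φ : E → ℝ} {u : E → F}
    {K : ℝ≥0} (hφ : Continuous φ) (hφc : HasCompactSupport φ) (hu : LipschitzWith K u) (x : E) :
    HasFDerivAt (φ ⋆[lsmul ℝ ℝ, μ] u) ((φ ⋆[lsmul ℝ ℝ, μ] fderiv ℝ u) x) x := by
  have hcont (z : E) : Continuous fun y => φ y • u (z - y) :=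
    hφ.smul (hu.continuous.comp (by fun_prop))
  have hlip (y : E) : LipschitzWith (‖φ y‖₊ * K) fun z => φ y • u (z - y) := by
    refine (lipschitzWith_smul (φ y)).comp ?_
    simpa [Function.comp_def] using hu.comp (LipschitzWith.id.sub (LipschitzWith.const y))
  have hderiv : ∀ᵐ y ∂μ, HasFDerivAt (fun z => φ y • u (z - y)) (φ y • fderiv ℝ u (x - y)) x := by
    filter_upwards [(quasiMeasurePreserving_sub_left_of_right_invariant μ x).ae
      (p := fun z => DifferentiableAt ℝ u z) hu.ae_differentiableAt] with y hy
    exact (hy.hasFDerivAt.comp x ((hasFDerivAt_id x).sub_const y)).const_smul (φ y)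
  refine (hasFDerivAt_integral_of_dominated_loc_of_lip (s := univ)
    (bound := fun y => (‖φ y‖₊ * K : ℝ≥0)) univ_mem
    (Eventually.of_forall fun z => (hcont z).aestronglyMeasurable)
    ((hcont x).integrable_of_hasCompactSupport hφc.smul_right)
    (hφ.aestronglyMeasurable.smul ?_) (Eventually.of_forall fun y => ?_)
    ((hφ.integrable_of_hasCompactSupport hφc).norm.mul_const _) hderiv).2
  · exact ((measurable_fderiv ℝ u).comp (by fun_prop)).aestronglyMeasurable
  · simpa only [Real.nnabs_coe] using (hlip y).lipschitzOnWith

lemma lintegral_enorm_contDiffBump_normed (φ : ContDiffBump (0 : E)) :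
    ∫⁻ x, ‖φ.normed μ x‖ₑ ∂μ = 1 := by
  have hnorm (x : E) : ‖φ.normed μ x‖ = φ.normed μ x := Real.norm_of_nonneg (φ.nonneg_normed x)
  simp only [← ofReal_integral_norm_eq_lintegral_enorm φ.integrable_normed, hnorm,
    φ.integral_normed, ENNReal.ofReal_one]

lemma lintegral_enorm_fderiv_normed_convolution_le {u : E → F} {K : ℝ≥0}
    (hu : LipschitzWith K u) (φ : ContDiffBump (0 : E)) :
    ∫⁻ x, ‖fderiv ℝ (φ.normed μ ⋆[lsmul ℝ ℝ, μ] u) x‖ₑ ∂μ ≤ ∫⁻ x, ‖fderiv ℝ u x‖ₑ ∂μ := by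
  simp only [(hasFDerivAt_convolution_of_lipschitzWith φ.continuous_normed
    φ.hasCompactSupport_normed hu _).fderiv]
  refine (lintegral_enorm_convolution_le φ.continuous_normed.measurable
    (measurable_fderiv ℝ u).enorm).trans_eq ?_
  rw [lintegral_enorm_contDiffBump_normed, one_mul]

theorem eLpNorm_le_lintegral_fderiv_of_lipschitzWith {u : E → F} {K p : ℝ≥0}
    (hp : NNReal.HolderConjugate (finrank ℝ E) p) (hu : LipschitzWith K u)
    (hc : HasCompactSupport u) :
    eLpNorm u p μ ≤ eLpNormLESNormFDerivOneConst μ p * ∫⁻ x, ‖fderiv ℝ u x‖ₑ ∂μ := by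
  let φ (k : ℕ) : ContDiffBump (0 : E) :=
    ⟨1 / ((k : ℝ) + 1) / 2, 1 / ((k : ℝ) + 1), by positivity, half_lt_self (by positivity)⟩
  let v (k : ℕ) : E → F := (φ k).normed μ ⋆[lsmul ℝ ℝ, μ] u
  have hv (k : ℕ) : ContDiff ℝ 1 (v k) :=
    (φ k).hasCompactSupport_normed.contDiff_convolution_left (n := 1) _ (φ k).contDiff_normed
      hu.continuous.locallyIntegrable
  have hvc (k : ℕ) : HasCompactSupport (v k) :=
    (φ k).hasCompactSupport_normed.convolution _ hc
  have hlim (x : E) : Tendsto (fun k => v k x) atTop (𝓝 (u x)) :=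
    ContDiffBump.convolution_tendsto_right_of_continuous tendsto_one_div_add_atTop_nhds_zero_nat
      hu.continuous x
  have hvu (k : ℕ) : eLpNorm (v k) p μ ≤
      eLpNormLESNormFDerivOneConst μ p * ∫⁻ x, ‖fderiv ℝ u x‖ₑ ∂μ := by
    grw [eLpNorm_le_eLpNorm_fderiv_one μ (hv k) (hvc k) hp, eLpNorm_one_eq_lintegral_enorm,
      lintegral_enorm_fderiv_normed_convolution_le hu (φ k)]
  exact (Lp.eLpNorm_lim_le_liminf_eLpNorm (fun k => (hv k).continuous.aestronglyMeasurable) u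
    (ae_of_all _ hlim)).trans (liminf_le_of_frequently_le' (Frequently.of_forall hvu))

lemma mul_measure_rpow_le_lintegral_fderiv {f : E → ℝ} {K p : ℝ≥0} {a b : ℝ}
    (hp : NNReal.HolderConjugate (finrank ℝ E) p) (hf : LipschitzWith K f)
    (hc : HasCompactSupport f) (ha : 0 ≤ a) (hab : a ≤ b) :
    ENNReal.ofReal (b - a) * μ {x | b < |f x|} ^ (1 / (p : ℝ)) ≤
      eLpNormLESNormFDerivOneConst μ p * ∫⁻ x in {x | |f x| ∈ Ioo a b}, ‖fderiv ℝ f x‖ₑ ∂μ := by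
  have hlip : LipschitzWith (1 * K) (levelSlice a b ∘ f) := (lipschitzWith_levelSlice a b).comp hf
  have hcs : HasCompactSupport (levelSlice a b ∘ f) :=
    hc.comp_left (levelSlice_of_le hab (by simpa using ha))
  calc ENNReal.ofReal (b - a) * μ {x | b < |f x|} ^ (1 / (p : ℝ))
      ≤ ENNReal.ofReal (b - a) *
          μ {x | ENNReal.ofReal (b - a) ≤ ‖(levelSlice a b ∘ f) x‖ₑ} ^ (1 / (p : ℝ)) := by
        gcongr with x
        intro hx
        simp [levelSlice_of_ge hx.le, Real.enorm_eq_ofReal (sub_nonneg.2 hab)]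
    _ ≤ eLpNorm (levelSlice a b ∘ f) p μ :=
        mul_measure_rpow_le_eLpNorm (by simpa using hp.symm.pos.ne') ENNReal.coe_ne_top
          hlip.continuous.aestronglyMeasurable _
    _ ≤ eLpNormLESNormFDerivOneConst μ p * ∫⁻ x, ‖fderiv ℝ (levelSlice a b ∘ f) x‖ₑ ∂μ :=
        eLpNorm_le_lintegral_fderiv_of_lipschitzWith hp hlip hcs
    _ ≤ _ := by
        have hmeas : MeasurableSet {x | |f x| ∈ Ioo a b} :=
          hf.continuous.abs.measurable measurableSet_Ioo
        rw [← lintegral_indicator hmeas]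
        gcongr with x
        exact enorm_fderiv_levelSlice_comp_le hf.continuous ha hab x

theorem lintegral_measure_rpow_le_lintegral_fderiv {f : E → ℝ} {K p : ℝ≥0} {l : ℝ}
    (hp : NNReal.HolderConjugate (finrank ℝ E) p) (hf : LipschitzWith K f)
    (hc : HasCompactSupport f) (hl : 0 ≤ l) :
    ∫⁻ τ in Ioi (0 : ℝ), μ {x | l + τ < |f x|} ^ (1 / (p : ℝ)) ≤
      eLpNormLESNormFDerivOneConst μ p * ∫⁻ x in {x | l < |f x|}, ‖fderiv ℝ f x‖ₑ ∂μ := by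
  let C : ℝ≥0∞ := (eLpNormLESNormFDerivOneConst μ p : ℝ≥0)
  have hheight : Measurable fun x => |f x| - l := hf.continuous.abs.measurable.sub_const l
  let ν : Measure ℝ :=
    C • (μ.withDensity fun x => ‖fderiv ℝ f x‖ₑ).map fun x => |f x| - l
  have hν {s : Set ℝ} (hs : MeasurableSet s) :
      ν s = C * ∫⁻ x in {x | |f x| - l ∈ s}, ‖fderiv ℝ f x‖ₑ ∂μ := by
    rw [Measure.smul_apply, Measure.map_apply hheight hs, withDensity_apply _ (hheight hs)]
    rfl
  have hslice (a b : ℝ) (ha : 0 ≤ a) (hab : a < b) :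
      ENNReal.ofReal (b - a) * μ {x | l + b < |f x|} ^ (1 / (p : ℝ)) ≤ ν (Ioo a b) := by
    have hset : {x | |f x| - l ∈ Ioo a b} = {x | |f x| ∈ Ioo (l + a) (l + b)} := by
      simp only [mem_Ioo, lt_sub_iff_add_lt', sub_lt_iff_lt_add']
    rw [hν measurableSet_Ioo, hset, ← add_sub_add_left_eq_sub b a l]
    exact mul_measure_rpow_le_lintegral_fderiv hp hf hc (by positivity) (by gcongr)
  simpa only [hν measurableSet_Ioi, mem_Ioi, sub_pos] using setLIntegral_Ioi_zero_le_measure hslice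

lemma lintegral_oscillation_le_lintegral_rearr_fderiv {f : E → ℝ} {K p : ℝ≥0} {t : ℝ}
    (hp : NNReal.HolderConjugate (finrank ℝ E) p) (hf : LipschitzWith K f)
    (hc : HasCompactSupport f) (ht : 0 < t) :
    ∫⁻ s in Ioc 0 t,
        ENNReal.ofReal ((rearr2 μ f s - rearr μ f s) * s ^ (-(finrank ℝ E : ℝ)⁻¹)) ≤
      (Real.toNNReal (p + finrank ℝ E) * eLpNormLESNormFDerivOneConst μ p : ℝ≥0) *
        ∫⁻ s in Ioc 0 t, ENNReal.ofReal (rearr μ (fun x => ‖fderiv ℝ f x‖) s) := by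
  have hp' : Real.HolderConjugate (finrank ℝ E) p := by simpa using hp.coe
  have hfm : AEMeasurable f μ := hf.continuous.measurable.aemeasurable
  have hfin : μ (Function.support f) ≠ ∞ := measure_support_ne_top μ hc
  obtain ⟨B, hB⟩ := hc.exists_bound_of_continuous hf.continuous
  have hsuper : μ {x | rearr μ f t < |f x|} ≤ ENNReal.ofReal t :=
    measure_rearr_lt_abs_le hfm hfin ht
  calc _ ≤ ENNReal.ofReal (p + finrank ℝ E) *
          ∫⁻ τ in Ioi (0 : ℝ), μ {x | rearr μ f t + τ < |f x|} ^ (1 / (p : ℝ)) := by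
        simpa [hp'.one_sub_inv] using lintegral_oscillation_le hfm hfin
          (integrableOn_rearr hfm hfin hB t) hp'.inv_pos (inv_lt_one_of_one_lt₀ hp'.lt)
    _ ≤ ENNReal.ofReal (p + finrank ℝ E) * (eLpNormLESNormFDerivOneConst μ p *
          ∫⁻ x in {x | rearr μ f t < |f x|}, ‖fderiv ℝ f x‖ₑ ∂μ) := by
        grw [lintegral_measure_rpow_le_lintegral_fderiv hp hf hc (rearr_nonneg μ f t)]
    _ ≤ ENNReal.ofReal (p + finrank ℝ E) * (eLpNormLESNormFDerivOneConst μ p *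
          ∫⁻ s in Ioc 0 t, ENNReal.ofReal (rearr μ (fun x => ‖fderiv ℝ f x‖) s)) := by
        have hgrad : AEMeasurable (fun x => ‖fderiv ℝ f x‖) μ :=
          (measurable_fderiv ℝ f).norm.aemeasurable
        gcongr
        simpa only [enorm_norm] using setLIntegral_enorm_le_lintegral_rearr hgrad
          (measure_support_ne_top μ (hc.fderiv (𝕜 := ℝ)).norm) hsuper
    _ = _ := by rw [ENNReal.coe_mul, mul_assoc]; rfl

lemma integrableOn_oscillation_and_integral_le {f : E → ℝ} {K p : ℝ≥0} {t : ℝ}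
    (hp : NNReal.HolderConjugate (finrank ℝ E) p) (hf : LipschitzWith K f)
    (hc : HasCompactSupport f) (ht : 0 < t) :
    IntegrableOn (fun s => (rearr2 μ f s - rearr μ f s) * s ^ (-(finrank ℝ E : ℝ)⁻¹)) (Ioc 0 t) ∧
      ∫ s in Ioc 0 t, (rearr2 μ f s - rearr μ f s) * s ^ (-(finrank ℝ E : ℝ)⁻¹) ≤
        (Real.toNNReal (p + finrank ℝ E) * eLpNormLESNormFDerivOneConst μ p : ℝ≥0) *
          ∫ s in Ioc 0 t, rearr μ (fun x => ‖fderiv ℝ f x‖) s := by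
  have hfm : AEMeasurable f μ := hf.continuous.measurable.aemeasurable
  have hfin : μ (Function.support f) ≠ ∞ := measure_support_ne_top μ hc
  obtain ⟨B, hB⟩ := hc.exists_bound_of_continuous hf.continuous
  have hint : IntegrableOn (rearr μ f) (Ioc 0 t) := integrableOn_rearr hfm hfin hB t
  have hgrad : IntegrableOn (rearr μ fun x => ‖fderiv ℝ f x‖) (Ioc 0 t) :=
    integrableOn_rearr (measurable_fderiv ℝ f).norm.aemeasurable
      (measure_support_ne_top μ (hc.fderiv (𝕜 := ℝ)).norm)
      (fun x => by simpa using norm_fderiv_le_of_lipschitz ℝ hf) t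
  refine integrable_and_integral_le_of_lintegral_ofReal_le ?_ ?_ hgrad
    (ae_of_all _ (rearr_nonneg μ _)) (lintegral_oscillation_le_lintegral_rearr_fderiv hp hf hc ht)
  · exact ((aestronglyMeasurable_rearr2 hint).sub hint.aestronglyMeasurable).mul
      (measurable_id.pow_const _).aestronglyMeasurable
  · filter_upwards [ae_restrict_mem measurableSet_Ioc] with s ⟨hs, hst⟩
    exact mul_nonneg (sub_nonneg.2 (rearr_le_rearr2 hfm hfin
      (hint.mono_set (Ioc_subset_Ioc_right hst)) hs)) (Real.rpow_nonneg hs.le _)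

theorem euclidean_integrated_oscillation_inequality_general (μ : Measure E) [μ.IsAddHaarMeasure]
    (hE : 1 < finrank ℝ E) :
    ∃ C : ℝ, 0 < C ∧ ∀ f : E → ℝ, (∃ K, LipschitzWith K f) → HasCompactSupport f →
      ∀ t : ℝ, 0 < t →
        IntervalIntegrable
          (fun s => (rearr2 μ f s - rearr μ f s) * s ^ (-(1 : ℝ) / finrank ℝ E)) volume 0 t ∧
        ∫ s in (0 : ℝ)..t, (rearr2 μ f s - rearr μ f s) * s ^ (-(1 : ℝ) / finrank ℝ E) ≤
          C * t * rearr2 μ (fun x => ‖fderiv ℝ f x‖) t := by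
  let p : ℝ≥0 := NNReal.conjExponent (finrank ℝ E)
  have hp : NNReal.HolderConjugate (finrank ℝ E) p :=
    NNReal.HolderConjugate.conjExponent (by exact_mod_cast hE)
  let A : ℝ≥0 := Real.toNNReal (p + finrank ℝ E) * eLpNormLESNormFDerivOneConst μ p
  refine ⟨A + 1, by positivity, fun f ⟨K, hf⟩ hc t ht => ?_⟩
  obtain ⟨hint, hle⟩ := integrableOn_oscillation_and_integral_le (μ := μ) hp hf hc ht
  simp only [neg_div, one_div]
  refine ⟨(intervalIntegrable_iff_integrableOn_Ioc_of_le ht.le).2 hint, ?_⟩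
  rw [intervalIntegral.integral_of_le ht.le, mul_assoc, mul_rearr2 ht]
  grw [hle]
  gcongr
  · exact setIntegral_nonneg measurableSet_Ioc fun s _ => rearr_nonneg μ _ s
  · exact le_add_of_nonneg_right zero_le_one

end Sobolev

/-- For `n > 1` there is `C = C(n)` such that for every
`f ∈ Lip₀(ℝⁿ)` and `t > 0`, `∫₀ᵗ (f**(s) - f*(s)) s^{-1/n} ds ≤ C t |∇f|**(t)`. -/
theorem euclidean_integrated_oscillation_inequality (n : ℕ) (hn : 1 < n) :
    ∃ C : ℝ, 0 < C ∧ ∀ f : EuclideanSpace ℝ (Fin n) → ℝ,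
      (∃ K, LipschitzWith K f) → HasCompactSupport f → ∀ t : ℝ, 0 < t →
        ∫ s in (0:ℝ)..t, (rearr2 volume f s - rearr volume f s) * s ^ (-(1:ℝ) / (n:ℝ)) ≤
          C * t * rearr2 volume (fun x => ‖fderiv ℝ f x‖) t := by
  obtain ⟨C, hC, hle⟩ := euclidean_integrated_oscillation_inequality_general
    (E := EuclideanSpace ℝ (Fin n)) volume (by simpa using hn)
  exact ⟨C, hC, fun f hf hc t ht => by simpa using (hle f hf hc t ht).2⟩
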